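/- arXiv:2301.12841 — 2 statements merged into one kernel-verified Lean document; each statement's English description precedes it below -/
import Mathlib

section
/- Let q be an odd prime power, let d = 3, and let r ∈ F_q^+ (a nonzero quadratic residue). If 𝓔 ⊆ F_q^3 has size at least 9·q^(7/3), then 𝓔 contains a pair of 4-paths with dilation ratio r. -/
/-!
Write `r = s²`. The map `(a, b) ↦ b - s a` sends the `|𝓔|² ≥ 81 q⁴` pairs of `𝓔 × 𝓔` into a set of
`q³` elements, so some fibre, over `z` say, has more than `4q` elements. Its first coordinates form
a set `X ⊆ 𝓔` with `s X + z ⊆ 𝓔` and `|X| > 4q`. As `x ↦ s x + z` multiplies every `‖x - x'‖` by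
`r`, any `4`-path in `X` whose steps have nonzero length, together with its image, is a pair of the
required kind.

Such a path exists because a set all of whose mutual differences are isotropic lies on a line, so
has at most `q` points (`card_le_of_isotropic`): in dimension `3` a totally isotropic subspace has
dimension at most `1`. Hence in the graph on `X` joining points with non-isotropic difference every
independent set has at most `q` vertices, and a graph with more than `k m` vertices whose
independent sets have at most `m` vertices contains a `k`-path (`exists_path`).
-/


/-- `norm2 x = x₁² + ⋯ + x_d²` for `x ∈ F_q^d`. -/
def norm2 {F : Type*} [Field F] {d : ℕ} (x : Fin d → F) : F := ∑ i, x i ^ 2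

/-- `𝓔` contains a pair of `k`-stars with dilation ratio `r`: there are distinct
`x₁, …, x_{k+1} ∈ 𝓔` and distinct `y₁, …, y_{k+1} ∈ 𝓔` with
`‖y_i − y₁‖ = r‖x_i − x₁‖ ≠ 0` for `i = 2, …, k+1`. -/
def ContainsPairOfStars {F : Type*} [Field F] {d : ℕ}
    (𝓔 : Finset (Fin d → F)) (k : ℕ) (r : F) : Prop :=
  ∃ x y : Fin (k + 1) → (Fin d → F),
    Function.Injective x ∧ Function.Injective y ∧
    (∀ i, x i ∈ 𝓔) ∧ (∀ i, y i ∈ 𝓔) ∧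
    ∀ i : Fin (k + 1), i ≠ 0 →
      norm2 (y i - y 0) = r * norm2 (x i - x 0) ∧ r * norm2 (x i - x 0) ≠ 0

/-- `𝓔` contains a pair of `k`-paths with dilation ratio `r`: there are distinct
`x₁, …, x_{k+1} ∈ 𝓔` and distinct `y₁, …, y_{k+1} ∈ 𝓔` with
`‖y_{i+1} − y_i‖ = r‖x_{i+1} − x_i‖ ≠ 0` for `i = 1, …, k`. -/
def ContainsPairOfPaths {F : Type*} [Field F] {d : ℕ}
    (𝓔 : Finset (Fin d → F)) (k : ℕ) (r : F) : Prop :=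
  ∃ x y : Fin (k + 1) → (Fin d → F),
    Function.Injective x ∧ Function.Injective y ∧
    (∀ i, x i ∈ 𝓔) ∧ (∀ i, y i ∈ 𝓔) ∧
    ∀ i : Fin k,
      norm2 (y i.succ - y i.castSucc) = r * norm2 (x i.succ - x i.castSucc) ∧
      r * norm2 (x i.succ - x i.castSucc) ≠ 0

/-- A set of more than `k * m` vertices, every independent subset of which has at most `m` elements,
contains a path with `k` edges. A maximal independent subset `I` is removed, a path with `k - 1`
edges is found in the remainder, and its first vertex has a neighbour in `I` by maximality. -/
lemma exists_path {α : Type*} (R : α → α → Prop) (hsymm : ∀ a b, R a b → R b a)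
    (hirr : ∀ a, ¬ R a a) (m : ℕ) (k : ℕ) (X : Finset α)
    (hm : ∀ I ⊆ X, (∀ a ∈ I, ∀ b ∈ I, ¬ R a b) → I.card ≤ m) (hX : k * m < X.card) :
    ∃ x : Fin (k + 1) → α, Function.Injective x ∧ (∀ i, x i ∈ X) ∧
      ∀ i : Fin k, R (x i.succ) (x i.castSucc) := by
  classical
  induction k generalizing X with
  | zero =>
    obtain ⟨a, ha⟩ := Finset.card_pos.mp (lt_of_le_of_lt (Nat.zero_le _) hX)
    exact ⟨fun _ => a, fun i j _ => Subsingleton.elim (α := Fin 1) i j, fun _ => ha,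
      fun i => i.elim0⟩
  | succ k ih =>
    obtain ⟨P, hP⟩ : ∃ P : Finset α → Prop, ∀ I, P I ↔ ∀ a ∈ I, ∀ b ∈ I, ¬ R a b :=
      ⟨_, fun _ => Iff.rfl⟩
    obtain ⟨I, hI, hmax⟩ := Finset.exists_max_image (X.powerset.filter P) Finset.card
      ⟨∅, by simp [hP]⟩
    obtain ⟨hIX, hind⟩ := Finset.mem_filter.mp hI
    rw [Finset.mem_powerset] at hIX
    rw [hP] at hind
    have hcard := hm I hIX hind
    have hsd := Finset.card_sdiff_add_card_eq_card hIX
    obtain ⟨x, hinj, hmem, hadj⟩ := ih (X \ I)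
      (fun J hJ => hm J (hJ.trans Finset.sdiff_subset)) (by
        rw [Nat.add_mul] at hX; omega)
    have h0 := Finset.mem_sdiff.mp (hmem 0)
    obtain ⟨u, hu, hRu⟩ : ∃ u ∈ I, R (x 0) u := by
      by_contra! hno
      have := hmax (insert (x 0) I) (by
        refine Finset.mem_filter.mpr
          ⟨Finset.mem_powerset.mpr (Finset.insert_subset h0.1 hIX), (hP _).mpr ?_⟩
        intro a ha b hb
        rcases Finset.mem_insert.mp ha with rfl | ha' <;>
          rcases Finset.mem_insert.mp hb with rfl | hb'
        · exact hirr _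
        · exact hno b hb'
        · exact fun h => hno a ha' (hsymm _ _ h)
        · exact hind a ha' b hb')
      rw [Finset.card_insert_of_notMem h0.2] at this
      omega
    refine ⟨Fin.cons u x, ?_, ?_, ?_⟩
    · rw [Fin.cons_injective_iff]
      refine ⟨?_, hinj⟩
      rintro ⟨i, rfl⟩
      exact (Finset.mem_sdiff.mp (hmem i)).2 hu
    · intro i
      refine Fin.cases (hIX hu) (fun j => ?_) i
      exact (Finset.mem_sdiff.mp (hmem j)).1
    · intro i
      refine Fin.cases ?_ (fun j => ?_) i
      · simpa using hRu
      · simpa [← Fin.succ_castSucc] using hadj j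

/-- If `a` and `b = (0, b₂, b₃)` in `F³` are isotropic and mutually orthogonal, and the first coordinate
of `a` is nonzero, then `b = 0`. -/
lemma isotropic_coord {F : Type*} [Field F] {a₁ a₂ a₃ b₂ b₃ : F} (ha : a₁ ≠ 0)
    (haa : a₁ ^ 2 + a₂ ^ 2 + a₃ ^ 2 = 0) (hbb : b₂ ^ 2 + b₃ ^ 2 = 0)
    (hab : a₂ * b₂ + a₃ * b₃ = 0) : b₂ = 0 ∧ b₃ = 0 := by
  have h2 : a₁ ^ 2 * b₂ ^ 2 = 0 := by
    linear_combination b₂ ^ 2 * haa - a₃ ^ 2 * hbb - (a₂ * b₂ - a₃ * b₃) * hab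
  have h : b₂ = 0 := by simpa [ha] using h2
  refine ⟨h, ?_⟩
  simpa [h] using hbb

/-- A set in `F_q^3` with all mutual differences isotropic has at most `q` elements. -/
lemma card_le_of_isotropic {F : Type*} [Field F] [Fintype F] (h2 : (2 : F) ≠ 0)
    (I : Finset (Fin 3 → F)) (hI : ∀ a ∈ I, ∀ b ∈ I, norm2 (a - b) = 0) :
    I.card ≤ Fintype.card F := by
  classical
  by_cases h1 : I.card ≤ 1
  · exact h1.trans Fintype.card_pos
  obtain ⟨p, hp, o, ho, hpo⟩ := Finset.one_lt_card.mp (not_le.mp h1)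
  obtain ⟨i, hi⟩ : ∃ i, p i - o i ≠ 0 := by
    by_contra! h
    exact hpo (funext fun i => sub_eq_zero.mp (h i))
  refine Finset.card_le_card_of_injOn (t := Finset.univ) (fun x => x i) (by simp) ?_
  intro x hx y hy hxy
  have hxy' : x i = y i := hxy
  have e1 := hI p hp o ho
  have e2 := hI x hx y hy
  have e3 := hI x hx p hp
  have e4 := hI x hx o ho
  have e5 := hI y hy p hp
  have e6 := hI y hy o ho
  simp only [norm2, Fin.sum_univ_three, Pi.sub_apply] at e1 e2 e3 e4 e5 e6
  -- Polarization: `p - o` is orthogonal to `x - y`.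
  have e7 : (p 0 - o 0) * (x 0 - y 0) + (p 1 - o 1) * (x 1 - y 1)
      + (p 2 - o 2) * (x 2 - y 2) = 0 := by
    refine (mul_eq_zero.mp ?_).resolve_left h2
    linear_combination -e3 + e4 + e5 - e6
  have key : x 0 - y 0 = 0 ∧ x 1 - y 1 = 0 ∧ x 2 - y 2 = 0 := by
    have hz : x i - y i = 0 := sub_eq_zero.mpr hxy'
    fin_cases i
    · simp only [Fin.zero_eta] at hz hi
      rw [hz] at e2 e7
      exact ⟨hz, isotropic_coord hi e1 (by linear_combination e2) (by linear_combination e7)⟩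
    · simp only [Fin.mk_one] at hz hi
      rw [hz] at e2 e7
      have := isotropic_coord (a₂ := p 0 - o 0) (a₃ := p 2 - o 2) (b₂ := x 0 - y 0)
        (b₃ := x 2 - y 2) hi (by linear_combination e1)
        (by linear_combination e2) (by linear_combination e7)
      exact ⟨this.1, hz, this.2⟩
    · simp only [Fin.reduceFinMk] at hz hi
      rw [hz] at e2 e7
      have := isotropic_coord (a₂ := p 0 - o 0) (a₃ := p 1 - o 1) (b₂ := x 0 - y 0)
        (b₃ := x 1 - y 1) hi (by linear_combination e1)
        (by linear_combination e2) (by linear_combination e7)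
      exact ⟨this.1, this.2, hz⟩
  funext j
  refine sub_eq_zero.mp ?_
  fin_cases j
  · exact key.1
  · exact key.2.1
  · exact key.2.2

lemma norm2_smul {F : Type*} [Field F] {d : ℕ} (s : F) (v : Fin d → F) :
    norm2 (s • v) = s * s * norm2 v := by
  simp only [norm2, Pi.smul_apply, smul_eq_mul, Finset.mul_sum]
  exact Finset.sum_congr rfl fun i _ => by ring

lemma norm2_sub_comm {F : Type*} [Field F] {d : ℕ} (v w : Fin d → F) :
    norm2 (v - w) = norm2 (w - v) := by
  simp only [norm2, Pi.sub_apply]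
  exact Finset.sum_congr rfl fun i _ => by ring

/-- Let `q` be an odd prime power and let `r` be a nonzero square in `F_q`.
If `𝓔 ⊆ F_q^3` has size at least `9·q^(7/3)`, then `𝓔` contains a pair of `4`-paths
with dilation ratio `r`. -/
theorem paths_dim_three {F : Type*} [Field F] [Fintype F]
    (hodd : Odd (Fintype.card F))
    {r : F} (hr : r ≠ 0) (hrsq : IsSquare r)
    (𝓔 : Finset (Fin 3 → F))
    (hcard : 9 * (Fintype.card F : ℝ) ^ ((7 : ℝ) / 3) ≤ (𝓔.card : ℝ)) :
    ContainsPairOfPaths 𝓔 4 r := by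
  classical
  obtain ⟨s, rfl⟩ := hrsq
  have hs : s ≠ 0 := fun h => hr (by simp [h])
  have h2 : (2 : F) ≠ 0 := by
    apply Ring.two_ne_zero
    intro h
    have := FiniteField.even_card_iff_char_two.mp h
    have := Nat.odd_iff.mp hodd
    omega
  set q := Fintype.card F with hq
  have hqpos : 0 < q := Fintype.card_pos
  have hE : 9 * q ^ 2 ≤ 𝓔.card := by
    have h1 : (q : ℝ) ^ 2 ≤ (q : ℝ) ^ ((7 : ℝ) / 3) := by
      rw [← Real.rpow_natCast]
      exact Real.rpow_le_rpow_of_exponent_le (by exact_mod_cast hqpos) (by norm_num)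
    have : (9 : ℝ) * (q : ℝ) ^ 2 ≤ 𝓔.card := by linarith
    exact_mod_cast this
  obtain ⟨z, -, hz⟩ := Finset.exists_lt_card_fiber_of_mul_lt_card_of_maps_to
    (s := 𝓔 ×ˢ 𝓔) (t := (Finset.univ : Finset (Fin 3 → F))) (f := fun p => p.2 - s • p.1)
    (n := 4 * q) (fun _ _ => Finset.mem_univ _) (by
      rw [Finset.card_univ, Fintype.card_fun, Fintype.card_fin, Finset.card_product, ← hq]
      have h4 : 0 < q ^ 4 := by positivity
      have := Nat.mul_le_mul hE hE
      nlinarith)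
  -- `X` is the projection of the fibre over `z` to the first factor.
  set X := 𝓔.filter fun x => s • x + z ∈ 𝓔 with hXdef
  have hX : 4 * q < X.card := by
    refine hz.trans_le (Finset.card_le_card_of_injOn Prod.fst ?_ ?_)
    · rintro ⟨a, b⟩ h
      simp only [Finset.coe_filter, Finset.mem_product, Set.mem_ofPred_eq] at h
      obtain ⟨⟨ha, hb⟩, rfl⟩ := h
      simp [hXdef, ha, hb]
    · rintro ⟨a, b⟩ h ⟨a', b'⟩ h' haa
      simp only [Finset.coe_filter, Finset.mem_product, Set.mem_ofPred_eq] at h h' haa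
      subst haa
      have := h.2.trans h'.2.symm
      simpa using this
  obtain ⟨x, hinj, hmem, hadj⟩ := exists_path (fun a b : Fin 3 → F => norm2 (a - b) ≠ 0)
    (fun a b h => by rwa [norm2_sub_comm]) (fun a => by simp [norm2]) q 4 X
    (fun I _ h => card_le_of_isotropic h2 I fun a ha b hb => not_not.mp (h a ha b hb)) hX
  have hmem' : ∀ i, x i ∈ 𝓔 ∧ s • x i + z ∈ 𝓔 := fun i => Finset.mem_filter.mp (hmem i)
  refine ⟨x, fun i => s • x i + z, hinj, ?_, fun i => (hmem' i).1, fun i => (hmem' i).2, ?_⟩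
  · intro i j hij
    exact hinj (smul_right_injective _ hs (add_right_cancel hij))
  · intro i
    refine ⟨?_, mul_ne_zero hr (hadj i)⟩
    rw [add_sub_add_right_eq_sub, ← smul_sub, norm2_smul]
end

section
/- Let q be an odd prime power with q ≥ 5, let d ≥ 6 be even, and let r ∈ F_q^*. If 𝓔 ⊆ F_q^d has size at least 313·q^(d/2), then 𝓔 contains a pair of 4-paths with dilation ratio r. -/
/-! ### Gauss sums and the distance distribution -/

theorem addChar_sum {F ι : Type*} [AddCommMonoid F] (ψ : AddChar F ℂ) (s : Finset ι) (f : ι → F) :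
    ψ (∑ i ∈ s, f i) = ∏ i ∈ s, ψ (f i) := by
  classical
  induction s using Finset.induction_on with
  | empty => simp
  | insert a s ha ih => rw [Finset.sum_insert ha, Finset.prod_insert ha, AddChar.map_add_eq_mul, ih]

open Finset in
/-- The square of the quadratic Gauss sum does not depend on the frequency `c ≠ 0`: counting square
roots with the quadratic character `χ`, the sum becomes the Gauss sum of `χ` and a primitive
additive character. -/
theorem gauss_sq {F : Type*} [Field F] [Fintype F] [DecidableEq F]
    (hF : ringChar F ≠ 2) {ψ : AddChar F ℂ} (hψ : ψ.IsPrimitive) {c : F} (hc : c ≠ 0) :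
    (∑ x : F, ψ (c * x ^ 2)) ^ 2 = (quadraticChar F (-1) : ℂ) * Fintype.card F := by
  have hψ' : (ψ.mulShift c).IsPrimitive := by
    intro a ha
    rw [AddChar.mulShift_mulShift]
    exact hψ (mul_ne_zero hc ha)
  let χ : MulChar F ℂ := (quadraticChar F).ringHomComp (Int.castRingHom ℂ)
  have hχ1 : χ ≠ 1 :=
    (MulChar.ringHomComp_ne_one_iff Int.cast_injective).mpr (quadraticChar_ne_one hF)
  have hχ2 : χ.IsQuadratic := (quadraticChar_isQuadratic F).comp _
  have key : ∑ x : F, ψ (c * x ^ 2) = gaussSum χ (ψ.mulShift c) := by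
    have h0 : ∑ t : F, ψ (c * t) = 0 := by
      have := AddChar.sum_mulShift c hψ
      simpa [hc, mul_comm] using this
    have h1 : ∀ t : F, ((#{x : F | x ^ 2 = t} : ℕ) : ℂ) = χ t + 1 := by
      intro t
      have h := quadraticChar_card_sqrts hF t
      have h2 : ({x : F | x ^ 2 = t} : Set F).toFinset = ({x : F | x ^ 2 = t} : Finset F) := by
        ext; simp
      rw [h2] at h
      have := congrArg (Int.cast : ℤ → ℂ) h
      push_cast at this
      exact this
    calc ∑ x : F, ψ (c * x ^ 2)
        = ∑ t : F, ∑ x : F with x ^ 2 = t, ψ (c * t) :=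
          (Finset.sum_fiberwise' univ (fun x : F => x ^ 2) (fun t => ψ (c * t))).symm
      _ = ∑ t : F, (χ t + 1) * ψ (c * t) := by
          refine Finset.sum_congr rfl fun t _ => ?_
          rw [Finset.sum_const, nsmul_eq_mul, h1]
      _ = gaussSum χ (ψ.mulShift c) := by
          simp only [add_mul, one_mul, Finset.sum_add_distrib, h0, add_zero]
          rfl
  rw [key, gaussSum_sq hχ1 hχ2 hψ']
  rfl

/-- Since the dimension is even, the `d`-dimensional Gauss sum is a real number independent of
the (nonzero) frequency `c`. -/
theorem gauss_dim {F : Type*} [Field F] [Fintype F] [DecidableEq F]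
    (hF : ringChar F ≠ 2) {ψ : AddChar F ℂ} (hψ : ψ.IsPrimitive) {c : F} (hc : c ≠ 0)
    {d m : ℕ} (hd : d = m + m) :
    ∑ ξ : Fin d → F, ψ (c * norm2 ξ) =
      ((((quadraticChar F (-1) : ℤ) : ℝ) * Fintype.card F) ^ m : ℝ) := by
  have h : ∀ ξ : Fin d → F, ψ (c * norm2 ξ) = ∏ i, ψ (c * ξ i ^ 2) := by
    intro ξ
    rw [norm2, Finset.mul_sum, addChar_sum]
  simp only [h]
  rw [← Fintype.sum_pow (fun x : F => ψ (c * x ^ 2)), hd, ← two_mul, pow_mul, gauss_sq hF hψ hc]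
  push_cast
  rfl

/-- The number of ordered pairs of points of `E` at distance `t`. -/
def distCount {F : Type*} [Field F] [DecidableEq F] {d : ℕ} (E : Finset (Fin d → F)) (t : F) : ℕ :=
  (Finset.filter (fun p => norm2 (p.2 - p.1) = t) (E ×ˢ E)).card

/-- The spectral mass of (the indicator function of) `E` on the sphere `‖ξ‖ = u` of frequencies. -/
noncomputable def specMass {F : Type*} [Field F] [Fintype F] [DecidableEq F] {d : ℕ}
    (ψ : AddChar F ℂ) (E : Finset (Fin d → F)) (u : F) : ℝ :=
  ∑ ξ : Fin d → F with norm2 ξ = u, ‖∑ x ∈ E, ψ (ξ ⬝ᵥ x)‖ ^ 2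

theorem sum_distCount {F : Type*} [Field F] [Fintype F] [DecidableEq F] {d : ℕ}
    (E : Finset (Fin d → F)) : ∑ t, distCount E t = E.card ^ 2 := by
  rw [sq, ← Finset.card_product]
  exact (Finset.card_eq_sum_card_fiberwise (fun _ _ => Finset.mem_coe.2 (Finset.mem_univ _))).symm

theorem distCount_char {F : Type*} [Field F] [Fintype F] [DecidableEq F] {d : ℕ}
    (ψ : AddChar F ℂ) (E : Finset (Fin d → F)) (s : F) :
    ∑ t, ((distCount E t : ℝ) : ℂ) * ψ (s * t) =
      ∑ p ∈ E ×ˢ E, ψ (s * norm2 (p.2 - p.1)) := by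
  rw [← Finset.sum_fiberwise' (E ×ˢ E) (fun p => norm2 (p.2 - p.1)) (fun t => ψ (s * t))]
  refine Finset.sum_congr rfl fun t _ => ?_
  rw [Finset.sum_const, nsmul_eq_mul, distCount]
  simp

theorem specMass_nonneg {F : Type*} [Field F] [Fintype F] [DecidableEq F] {d : ℕ}
    (ψ : AddChar F ℂ) (E : Finset (Fin d → F)) (u : F) : 0 ≤ specMass ψ E u :=
  Finset.sum_nonneg fun _ _ => by positivity

theorem normSq_fourier {F : Type*} [Field F] [Fintype F] {d : ℕ}
    (ψ : AddChar F ℂ) (E : Finset (Fin d → F)) (ξ : Fin d → F) :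
    ((‖∑ x ∈ E, ψ (ξ ⬝ᵥ x)‖ ^ 2 : ℝ) : ℂ) = ∑ p ∈ E ×ˢ E, ψ (ξ ⬝ᵥ (p.2 - p.1)) := by
  rw [Complex.ofReal_pow, ← Complex.conj_mul', map_sum, Finset.sum_mul_sum, Finset.sum_product]
  refine Finset.sum_congr rfl fun x _ => Finset.sum_congr rfl fun y _ => ?_
  rw [← AddChar.map_neg_eq_conj, ← AddChar.map_add_eq_mul, dotProduct_sub]
  congr 1
  ring

/-- Opening the square of the Fourier transform, weighted by the phase `ψ (c * ‖ξ‖)`. -/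
theorem specMass_char {F : Type*} [Field F] [Fintype F] [DecidableEq F] {d : ℕ}
    (ψ : AddChar F ℂ) (E : Finset (Fin d → F)) (c : F) :
    ∑ u, (specMass ψ E u : ℂ) * ψ (c * u) =
      ∑ p ∈ E ×ˢ E, ∑ ξ : Fin d → F, ψ (ξ ⬝ᵥ (p.2 - p.1) + c * norm2 ξ) := by
  rw [Finset.sum_comm]
  have h : ∀ u, (specMass ψ E u : ℂ) * ψ (c * u) = ∑ ξ : Fin d → F with norm2 ξ = u,
      ∑ p ∈ E ×ˢ E, ψ (ξ ⬝ᵥ (p.2 - p.1) + c * norm2 ξ) := by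
    intro u
    rw [specMass, Complex.ofReal_sum, Finset.sum_mul]
    refine Finset.sum_congr rfl fun ξ hξ => ?_
    rw [normSq_fourier, Finset.sum_mul, (Finset.mem_filter.1 hξ).2]
    simp only [AddChar.map_add_eq_mul]
  simp only [h]
  exact Finset.sum_fiberwise _ _ _

/-- Completing the square: the quadratic phase at frequency `-1/(4s)` on the Fourier side is, up to
the Gauss sum, the quadratic phase at frequency `s` on the physical side. -/
theorem char_duality {F : Type*} [Field F] [Fintype F] [DecidableEq F]
    (hF : ringChar F ≠ 2) {ψ : AddChar F ℂ} (hψ : ψ.IsPrimitive)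
    {d m : ℕ} (hd : d = m + m) (E : Finset (Fin d → F)) {s c : F} (hsc : 4 * s * c = -1) :
    ∑ u, (specMass ψ E u : ℂ) * ψ (c * u) =
      ((((quadraticChar F (-1) : ℤ) : ℝ) * Fintype.card F) ^ m : ℝ) *
        ∑ t, ((distCount E t : ℝ) : ℂ) * ψ (s * t) := by
  have hc : c ≠ 0 := by
    rintro rfl
    simp at hsc
  rw [specMass_char, distCount_char, Finset.mul_sum]
  refine Finset.sum_congr rfl fun p _ => ?_
  rw [← gauss_dim hF hψ hc hd, Finset.sum_mul]
  set w := p.2 - p.1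
  -- the translation by `2 s w` removes the linear phase `ψ (ξ ⬝ᵥ w)`, as `4 s c = -1`
  rw [← Equiv.sum_comp (Equiv.addRight ((2 * s) • w))]
  refine Finset.sum_congr rfl fun ζ _ => ?_
  rw [← AddChar.map_add_eq_mul]
  congr 1
  simp only [Equiv.coe_addRight, norm2, dotProduct, Finset.mul_sum, ← Finset.sum_add_distrib,
    Pi.add_apply, Pi.smul_apply, smul_eq_mul]
  refine Finset.sum_congr rfl fun i _ => ?_
  linear_combination (ζ i * w i + s * w i ^ 2) * hsc

/-- Plancherel's identity for the indicator function of `E`. -/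
theorem sum_specMass {F : Type*} [Field F] [Fintype F] [DecidableEq F]
    {ψ : AddChar F ℂ} (hψ : ψ.IsPrimitive) {d : ℕ} (E : Finset (Fin d → F)) :
    ∑ u, specMass ψ E u = (Fintype.card F : ℝ) ^ d * E.card := by
  have h := specMass_char ψ E 0
  simp only [zero_mul, AddChar.map_zero_eq_one, mul_one, add_zero] at h
  have h2 : ∀ w : Fin d → F, ∑ ξ : Fin d → F, ψ (ξ ⬝ᵥ w) =
      if w = 0 then (Fintype.card F : ℂ) ^ d else 0 := by
    intro w
    have h3 : ∀ ξ : Fin d → F, ψ (ξ ⬝ᵥ w) = ∏ i, ψ (ξ i * w i) := fun ξ => by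
      rw [dotProduct, addChar_sum]
    simp only [h3]
    rw [← Fintype.prod_sum (fun (i : Fin d) (x : F) => ψ (x * w i))]
    simp only [AddChar.sum_mulShift _ hψ]
    split_ifs with hw
    · simp [hw]
    · obtain ⟨i, hi⟩ := Function.ne_iff.1 hw
      exact Finset.prod_eq_zero (Finset.mem_univ i) (by simpa using hi)
  simp only [h2, Finset.sum_product, sub_eq_zero] at h
  have : ∀ x ∈ E, (∑ y ∈ E, if y = x then (Fintype.card F : ℂ) ^ d else 0) =
      (Fintype.card F : ℂ) ^ d := fun x hx => by simp [hx]
  rw [Finset.sum_congr rfl this, Finset.sum_const, nsmul_eq_mul, mul_comm] at h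
  exact_mod_cast h

/-- Parseval's identity on the line `F`, correlating `f` with its dilate `t ↦ f (r * t)`. -/
theorem parseval_ratio {F : Type*} [Field F] [Fintype F] [DecidableEq F]
    {ψ : AddChar F ℂ} (hψ : ψ.IsPrimitive) (f : F → ℝ) (r : F) :
    ∑ s, (∑ t, (f t : ℂ) * ψ (-(r * s) * t)) * (∑ t, (f t : ℂ) * ψ (s * t)) =
      ((Fintype.card F * ∑ t, f t * f (r * t) : ℝ) : ℂ) := by
  have h1 : ∀ s, (∑ t, (f t : ℂ) * ψ (-(r * s) * t)) * (∑ t, (f t : ℂ) * ψ (s * t)) =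
      ∑ t, ∑ t', (f t : ℂ) * f t' * ψ (s * (t' - r * t)) := by
    intro s
    rw [Finset.sum_mul_sum]
    refine Finset.sum_congr rfl fun t _ => Finset.sum_congr rfl fun t' _ => ?_
    rw [show s * (t' - r * t) = -(r * s) * t + s * t' by ring, AddChar.map_add_eq_mul]
    ring
  simp only [h1]
  rw [Finset.sum_comm]
  push_cast
  rw [Finset.mul_sum]
  refine Finset.sum_congr rfl fun t _ => ?_
  rw [Finset.sum_comm]
  simp only [← Finset.mul_sum, AddChar.sum_mulShift _ hψ, sub_eq_zero]
  simp
  ring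

/-- Fourier inversion on the line `F`, at the point `0`. -/
theorem inversion_zero {F : Type*} [Field F] [Fintype F] [DecidableEq F]
    {ψ : AddChar F ℂ} (hψ : ψ.IsPrimitive) (f : F → ℝ) :
    ∑ s, ∑ t, (f t : ℂ) * ψ (s * t) = ((Fintype.card F * f 0 : ℝ) : ℂ) := by
  rw [Finset.sum_comm]
  simp only [← Finset.mul_sum, AddChar.sum_mulShift _ hψ]
  simp
  ring

/-! ### Counting pairs of distances in ratio `r` -/

/-- The value `K` of the `d`-dimensional Gauss sum satisfies `K² = q^d`, whatever its sign. -/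
theorem gaussConst_sq {F : Type*} [Field F] [Fintype F] [DecidableEq F]
    {d m : ℕ} (hd : d = m + m) :
    ∃ K : ℝ, (((quadraticChar F (-1) : ℤ) : ℝ) * Fintype.card F) ^ m = K ∧
      K ^ 2 = (Fintype.card F : ℝ) ^ d := by
  have h1 : quadraticChar F (-1) ^ 2 = 1 := quadraticChar_sq_one (neg_ne_zero.2 one_ne_zero)
  have h2 : ((quadraticChar F (-1) : ℤ) : ℝ) ^ 2 = 1 := by exact_mod_cast h1
  refine ⟨_, rfl, ?_⟩
  rw [← pow_mul, mul_comm m 2, pow_mul, mul_pow, h2, one_mul, ← pow_mul, hd, two_mul]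

/-- Two functions that agree, up to an involution fixing `0`, at nonzero points have sums differing
only through their values at `0`. -/
theorem sum_sub_involutive {F : Type*} [Field F] [Fintype F] [DecidableEq F]
    (U T : F → ℂ) (φ : F → F) (hφ : Function.Involutive φ) (h0 : φ 0 = 0)
    (h : ∀ s, s ≠ 0 → U (φ s) = T s) : ∑ c, U c - ∑ s, T s = U 0 - T 0 := by
  rw [← Equiv.sum_comp hφ.toPerm U, ← Finset.sum_sub_distrib]
  rw [Finset.sum_eq_single 0]
  · simp [h0]
  · intro s _ hs
    simp [h s hs]
  · simp

theorem four_ne_zero_of_odd {F : Type*} [Field F] (hF : ringChar F ≠ 2) : (4 : F) ≠ 0 := by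
  have h2 : (2 : F) ≠ 0 := Ring.two_ne_zero hF
  have : (4 : F) = 2 * 2 := by norm_num
  rw [this]
  exact mul_ne_zero h2 h2

/-- The ratio count of distances, minus its main term, is proportional to
its spectral analogue minus the corresponding main term. -/
theorem ratio_identity {F : Type*} [Field F] [Fintype F] [DecidableEq F]
    (hF : ringChar F ≠ 2) {ψ : AddChar F ℂ} (hψ : ψ.IsPrimitive)
    {d m : ℕ} (hd : d = m + m) (E : Finset (Fin d → F)) {r : F} (hr : r ≠ 0) :
    Fintype.card F * (∑ u, specMass ψ E u * specMass ψ E (r * u)) -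
        ((Fintype.card F : ℝ) ^ d * E.card) ^ 2 =
      (Fintype.card F : ℝ) ^ d * (Fintype.card F *
        (∑ t, (distCount E t : ℝ) * distCount E (r * t)) - (E.card : ℝ) ^ 4) := by
  have h4 := four_ne_zero_of_odd hF
  obtain ⟨K, hK, hK2⟩ := gaussConst_sq (F := F) hd
  have hA := parseval_ratio hψ (specMass ψ E) r
  have hS := parseval_ratio hψ (fun t => (distCount E t : ℝ)) r
  -- under `s ↦ (4 r s)⁻¹` the dual frequencies of `s` and `-r s` are `-r c` and `c`
  have h := sum_sub_involutive
    (fun s => (∑ t, (specMass ψ E t : ℂ) * ψ (-(r * s) * t)) *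
      (∑ t, (specMass ψ E t : ℂ) * ψ (s * t)))
    (fun s => (K : ℂ) ^ 2 * ((∑ t, ((distCount E t : ℝ) : ℂ) * ψ (-(r * s) * t)) *
      (∑ t, ((distCount E t : ℝ) : ℂ) * ψ (s * t))))
    (fun s => (4 * r * s)⁻¹) (fun s => by
      by_cases hs : s = 0
      · simp [hs]
      · field_simp) (by simp) (fun s hs => by
      have e1 := char_duality hF hψ hd E (s := s) (c := -(r * (4 * r * s)⁻¹)) (by field_simp)
      have e2 := char_duality hF hψ hd E (s := -(r * s)) (c := (4 * r * s)⁻¹) (by field_simp)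
      simp only [e1, e2, hK]
      ring)
  have hs1 := sum_specMass hψ E
  have hs2 : ∑ t, (distCount E t : ℝ) = (E.card : ℝ) ^ 2 := by exact_mod_cast sum_distCount E
  rw [← Finset.mul_sum, hA, hS] at h
  simp only [mul_zero, neg_zero, zero_mul, AddChar.map_zero_eq_one, mul_one,
    ← Complex.ofReal_sum, hs1, hs2] at h
  have h' : (Fintype.card F * (∑ u, specMass ψ E u * specMass ψ E (r * u)) : ℝ) -
      K ^ 2 * (Fintype.card F * (∑ t, (distCount E t : ℝ) * distCount E (r * t))) =
      ((Fintype.card F : ℝ) ^ d * E.card) * ((Fintype.card F : ℝ) ^ d * E.card) -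
      K ^ 2 * ((E.card : ℝ) ^ 2 * (E.card : ℝ) ^ 2) := by exact_mod_cast h
  rw [hK2] at h'
  linear_combination h'

/-- The number of pairs at distance zero, in terms of the spectral mass on the isotropic cone. -/
theorem zero_identity {F : Type*} [Field F] [Fintype F] [DecidableEq F]
    (hF : ringChar F ≠ 2) {ψ : AddChar F ℂ} (hψ : ψ.IsPrimitive)
    {d m : ℕ} (hd : d = m + m) (E : Finset (Fin d → F)) :
    (Fintype.card F * specMass ψ E 0 - (Fintype.card F : ℝ) ^ d * E.card) ^ 2 =
      (Fintype.card F : ℝ) ^ d *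
        (Fintype.card F * (distCount E 0 : ℝ) - (E.card : ℝ) ^ 2) ^ 2 := by
  have h4 := four_ne_zero_of_odd hF
  obtain ⟨K, hK, hK2⟩ := gaussConst_sq (F := F) hd
  have hA := inversion_zero hψ (specMass ψ E)
  have hS := inversion_zero hψ (fun t => (distCount E t : ℝ))
  have h := sum_sub_involutive
    (fun s => ∑ t, (specMass ψ E t : ℂ) * ψ (s * t))
    (fun s => (K : ℂ) * ∑ t, ((distCount E t : ℝ) : ℂ) * ψ (s * t))
    (fun s => -(4 * s)⁻¹) (fun s => by
      by_cases hs : s = 0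
      · simp [hs]
      · field_simp) (by simp) (fun s hs =>
        by
        rw [← hK]
        exact char_duality hF hψ hd E (s := s) (c := -(4 * s)⁻¹) (by field_simp))
  have hs1 := sum_specMass hψ E
  have hs2 : ∑ t, (distCount E t : ℝ) = (E.card : ℝ) ^ 2 := by exact_mod_cast sum_distCount E
  rw [← Finset.mul_sum, hA, hS] at h
  simp only [zero_mul, AddChar.map_zero_eq_one, mul_one,
    ← Complex.ofReal_sum, hs1, hs2] at h
  have h' : (Fintype.card F * specMass ψ E 0 : ℝ) - K * (Fintype.card F * (distCount E 0 : ℝ)) =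
      (Fintype.card F : ℝ) ^ d * E.card - K * (E.card : ℝ) ^ 2 := by exact_mod_cast h
  rw [← hK2] at h' ⊢
  rw [show Fintype.card F * specMass ψ E 0 - K ^ 2 * E.card =
    K * (Fintype.card F * (distCount E 0 : ℝ) - (E.card : ℝ) ^ 2) by linear_combination h']
  ring

/-- The final estimate, with `Q = q ^ m`, `v` the number of pairs at distance zero and `M` the full
ratio count. The term `b ^ 2`, which may dominate both `M` and `v ^ 2`, cancels. -/
theorem real_ineq {q Q N M v b : ℝ} (hq : 5 ≤ q) (hQ : q ^ 3 ≤ Q) (hN : 313 * Q ≤ N)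
    (hb0 : 0 ≤ b) (hb : b ≤ Q * N)
    (hM : N ^ 4 + q * b ^ 2 - Q ^ 2 * N ^ 2 ≤ q * M)
    (hv : (q * v - N ^ 2) ^ 2 = (q * b - Q * N) ^ 2) :
    100 * N ^ 3 ≤ M - v ^ 2 := by
  have hQ0 : 0 < Q := lt_of_lt_of_le (by positivity) hQ
  have hN0 : 0 < N := by linarith
  -- `y` is the deviation of `q * v` from its expected value
  set y := q * v - N ^ 2 with hy
  have hQN : 0 < Q * N := by positivity
  have hylt : y ≤ q * (Q * N) := by
    apply abs_le_of_sq_le_sq' _ (by positivity) |>.2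
    rw [hv]
    apply sq_le_sq'
    · nlinarith
    · nlinarith
  have hqv : q * v = N ^ 2 + y := by rw [hy]; ring
  have hqv2 : q ^ 2 * v ^ 2 = N ^ 4 + 2 * N ^ 2 * y + (q * b - Q * N) ^ 2 := by
    rw [← hv, ← mul_pow, hqv]; ring
  have h1 : N ^ 2 * y ≤ N ^ 2 * (q * (Q * N)) := by gcongr
  have h2 : q * (N ^ 4 + q * b ^ 2 - Q ^ 2 * N ^ 2) ≤ q * (q * M) := by gcongr
  have h3 : 0 ≤ q * b * (Q * N) := by positivity
  have h4 : q ^ 2 * (M - v ^ 2) ≥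
      (q - 1) * N ^ 4 - (q + 1) * Q ^ 2 * N ^ 2 - 2 * q * Q * N ^ 3 := by
    nlinarith
  have h5 : Q * N ^ 3 ≤ N ^ 4 / 313 := by
    have : (313 * Q) * N ^ 3 ≤ N * N ^ 3 := by gcongr
    nlinarith
  have h6 : Q ^ 2 * N ^ 2 ≤ N ^ 4 / 313 := by
    have : Q * N ^ 2 * (313 * Q) ≤ Q * N ^ 2 * N := by gcongr
    have hp : 0 ≤ Q * N ^ 3 := by positivity
    nlinarith
  have h7 : (q - 1) * N ^ 4 - (q + 1) * Q ^ 2 * N ^ 2 - 2 * q * Q * N ^ 3 ≥ q * N ^ 4 / 2 := by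
    have a1 : (q + 1) * (Q ^ 2 * N ^ 2) ≤ (q + 1) * (N ^ 4 / 313) := by gcongr
    have a2 : q * (Q * N ^ 3) ≤ q * (N ^ 4 / 313) := by gcongr
    have a3 : 5 * N ^ 4 ≤ q * N ^ 4 := by gcongr
    nlinarith
  have h8 : q * N ^ 4 / 2 ≥ q ^ 2 * (100 * N ^ 3) := by
    have b1 : 313 * q ^ 3 ≤ N := by linarith
    have b2 : q * N ^ 3 * (313 * q ^ 3) ≤ q * N ^ 3 * N := by gcongr
    have b3 : q ^ 2 * N ^ 3 * 5 ^ 2 ≤ q ^ 2 * N ^ 3 * q ^ 2 := by gcongr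
    have b4 : 0 ≤ q ^ 2 * N ^ 3 := by positivity
    nlinarith
  have hq2 : 0 < q ^ 2 := by positivity
  nlinarith

/-- Counting only nonzero distances, many pairs of pairs of points of `E` have distances in
ratio `r`. -/
theorem ratio_count {F : Type*} [Field F] [Fintype F] [DecidableEq F]
    (hF : ringChar F ≠ 2) (hq5 : 5 ≤ Fintype.card F)
    {d m : ℕ} (hd : d = m + m) (hm : 3 ≤ m) (E : Finset (Fin d → F)) {r : F} (hr : r ≠ 0)
    (hcard : 313 * (Fintype.card F : ℝ) ^ m ≤ (E.card : ℝ)) :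
    100 * E.card ^ 3 ≤ ∑ t ∈ Finset.univ.erase 0, distCount E t * distCount E (r * t) := by
  have hψ := AddChar.FiniteField.primitiveChar_to_Complex_isPrimitive F
  set ψ := AddChar.FiniteField.primitiveChar_to_Complex F
  have hR := ratio_identity hF hψ hd E hr
  have hZ := zero_identity hF hψ hd E
  have hq : (5 : ℝ) ≤ Fintype.card F := by exact_mod_cast hq5
  set q : ℝ := (Fintype.card F : ℝ)
  have hqd : q ^ d = (q ^ m) ^ 2 := by rw [hd, pow_add, sq]
  have hQ : q ^ 3 ≤ q ^ m := pow_le_pow_right₀ (by linarith) hm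
  have hs := sum_specMass hψ E
  have ha0 := specMass_nonneg ψ E
  have ha1 : specMass ψ E 0 ≤ q ^ d * E.card := by
    rw [← hs]
    exact Finset.single_le_sum (fun u _ => ha0 u) (Finset.mem_univ 0)
  have ha2 : specMass ψ E 0 ^ 2 ≤ ∑ u, specMass ψ E u * specMass ψ E (r * u) := by
    have := Finset.single_le_sum (f := fun u => specMass ψ E u * specMass ψ E (r * u))
      (fun u _ => mul_nonneg (ha0 u) (ha0 _)) (Finset.mem_univ 0)
    simpa [sq] using this
  rw [hqd] at hR hZ ha1
  set Q := q ^ m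
  have hQ0 : 0 < Q := lt_of_lt_of_le (by positivity) hQ
  set M : ℝ := ∑ t, (distCount E t : ℝ) * distCount E (r * t) with hM
  obtain ⟨b, hb⟩ : ∃ b, specMass ψ E 0 = Q * b := ⟨specMass ψ E 0 / Q, by field_simp⟩
  have hb0 : 0 ≤ b := by
    have := ha0 0
    rw [hb] at this
    exact nonneg_of_mul_nonneg_right this hQ0
  rw [hb] at ha1 ha2 hZ
  have key := real_ineq (M := M) (v := distCount E 0) (b := b) hq hQ hcard hb0
    (by nlinarith)
    (by
      have : q * (Q * b) ^ 2 ≤ q * ∑ u, specMass ψ E u * specMass ψ E (r * u) := by gcongr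
      have h2 : Q ^ 2 * ((E.card : ℝ) ^ 4 + q * b ^ 2 - Q ^ 2 * (E.card : ℝ) ^ 2) ≤
        Q ^ 2 * (q * M) := by nlinarith
      exact le_of_mul_le_mul_left h2 (by positivity))
    (by
      have h2 : Q ^ 2 ≠ 0 := by positivity
      apply mul_left_cancel₀ h2
      rw [← hZ]
      ring)
  have hsplit : M = (∑ t ∈ Finset.univ.erase 0, (distCount E t : ℝ) * distCount E (r * t)) +
      (distCount E 0 : ℝ) ^ 2 := by
    rw [hM, ← Finset.sum_erase_add _ _ (Finset.mem_univ (0 : F)), mul_zero, sq]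
  rw [hsplit, add_sub_cancel_right] at key
  exact_mod_cast key

/-! ### Greedy paths in the ratio graph -/

/-- A finite graph with large average degree has a nonempty subset in which all degrees are
large: vertices of degree less than `k` can be deleted one at a time, each deletion lowering the
sum of the degrees by less than `2 * k`. -/
theorem exists_minDegree {α : Type*} [DecidableEq α] (R : α → α → Prop) [DecidableRel R]
    (hR : ∀ u v, R u v → R v u) (k : ℕ) (A : Finset α)
    (hA : 2 * k * A.card < ∑ u ∈ A, (A.filter (R u)).card) :
    ∃ B ⊆ A, B.Nonempty ∧ ∀ u ∈ B, k ≤ (B.filter (R u)).card := by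
  induction A using Finset.strongInduction with
  | H A ih =>
    by_cases h : ∀ u ∈ A, k ≤ (A.filter (R u)).card
    · refine ⟨A, subset_rfl, ?_, h⟩
      rw [Finset.nonempty_iff_ne_empty]
      rintro rfl
      simp at hA
    · push Not at h
      obtain ⟨v, hv, hlt⟩ := h
      obtain ⟨B, hB, hB'⟩ := ih (A.erase v) (Finset.erase_ssubset hv) (by
        have h1 : ∀ u ∈ A.erase v, (A.filter (R u)).card ≤
            ((A.erase v).filter (R u)).card + if R v u then 1 else 0 := by
          intro u _
          rw [Finset.filter_erase]
          split_ifs with huv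
          · exact Nat.sub_le_iff_le_add.1 Finset.pred_card_le_card_erase
          · rw [Finset.erase_eq_of_notMem (fun hm => huv (hR _ _ (Finset.mem_filter.1 hm).2))]
            simp
        have h2 := Finset.sum_le_sum h1
        rw [Finset.sum_add_distrib, ← Finset.card_filter] at h2
        have h3 : ((A.erase v).filter (R v)).card ≤ (A.filter (R v)).card :=
          Finset.card_le_card (Finset.filter_subset_filter _ (Finset.erase_subset _ _))
        have h4 := Finset.add_sum_erase A (fun u => (A.filter (R u)).card) hv
        have h5 := Finset.card_erase_add_one hv
        rw [← h5] at hA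
        nlinarith)
      exact ⟨B, hB.trans (Finset.erase_subset _ _), hB'⟩

theorem norm2_neg {F : Type*} [Field F] {d : ℕ} (w : Fin d → F) : norm2 (-w) = norm2 w := by
  simp [norm2]

/-- Adjacency on pairs of points: the step between second coordinates is `r` times as long as the
step between first coordinates, and both are nonzero. -/
def RatioAdj {F : Type*} [Field F] {d : ℕ} (r : F) (u v : (Fin d → F) × (Fin d → F)) : Prop :=
  norm2 (v.2 - u.2) = r * norm2 (v.1 - u.1) ∧ r * norm2 (v.1 - u.1) ≠ 0

theorem RatioAdj.symm {F : Type*} [Field F] {d : ℕ} {r : F} (u v : (Fin d → F) × (Fin d → F))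
    (h : RatioAdj r u v) : RatioAdj r v u := by
  unfold RatioAdj at *
  rwa [← norm2_neg (u.2 - v.2), ← norm2_neg (u.1 - v.1), neg_sub, neg_sub]

/-- Sorting the adjacent pairs of the ratio graph on `E × E` by the distance `t` between their
first coordinates bounds the sum of the degrees from below. -/
theorem sum_degree {F : Type*} [Field F] [Fintype F] [DecidableEq F] {d : ℕ}
    (E : Finset (Fin d → F)) {r : F} (hr : r ≠ 0) [DecidableRel (RatioAdj (d := d) r)] :
    ∑ t ∈ Finset.univ.erase 0, distCount E t * distCount E (r * t) ≤
      ∑ u ∈ E ×ˢ E, ((E ×ˢ E).filter (RatioAdj r u)).card := by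
  have h : ∀ t ∈ Finset.univ.erase (0 : F), distCount E t * distCount E (r * t) =
      (Finset.filter (fun p : ((Fin d → F) × (Fin d → F)) × ((Fin d → F) × (Fin d → F)) =>
        norm2 (p.1.2 - p.1.1) = t ∧ norm2 (p.2.2 - p.2.1) = r * t)
        ((E ×ˢ E) ×ˢ (E ×ˢ E))).card := by
    intro t _
    rw [distCount, distCount, ← Finset.card_product]
    congr 1
    ext z
    simp only [Finset.mem_filter, Finset.mem_product]
    tauto
  rw [Finset.sum_congr rfl h, ← Finset.card_sigma, ← Finset.card_sigma]
  refine Finset.card_le_card_of_injOn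
    (fun z => ⟨(z.2.1.1, z.2.2.1), (z.2.1.2, z.2.2.2)⟩) ?_ ?_
  · rintro ⟨t, ⟨x, x'⟩, ⟨y, y'⟩⟩ hz
    simp only [Finset.coe_sigma, Set.mem_sigma_iff, Finset.mem_coe, Finset.mem_filter,
      Finset.mem_product, Finset.mem_erase, Finset.mem_univ, and_true] at hz ⊢
    obtain ⟨ht, ⟨⟨hx, hx'⟩, hy, hy'⟩, h1, h2⟩ := hz
    refine ⟨⟨hx, hy⟩, ⟨hx', hy'⟩, ?_, ?_⟩
    · simp only [h1, h2]
    · simp only [h1]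
      exact mul_ne_zero hr ht
  · rintro ⟨t, ⟨x, x'⟩, ⟨y, y'⟩⟩ hz ⟨s, ⟨a, a'⟩, ⟨b, b'⟩⟩ hz' h
    simp only [Finset.coe_sigma, Set.mem_sigma_iff, Finset.mem_coe, Finset.mem_filter] at hz hz'
    simp only [Sigma.mk.injEq, Prod.mk.injEq, heq_eq_eq] at h
    obtain ⟨⟨rfl, rfl⟩, rfl, rfl⟩ := h
    obtain rfl := hz.2.2.1
    obtain rfl := hz'.2.2.1
    rfl

/-- A path can be extended while avoiding up to four prescribed points in each coordinate: the
neighbours sharing a coordinate with those points number at most `8 * #E`. -/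
theorem exists_step {F : Type*} [Field F] [DecidableEq F] {d : ℕ}
    (E : Finset (Fin d → F)) {r : F} [DecidableRel (RatioAdj (d := d) r)]
    {B : Finset ((Fin d → F) × (Fin d → F))} (hB : B ⊆ E ×ˢ E)
    (hdeg : ∀ u ∈ B, 8 * E.card + 1 ≤ (B.filter (RatioAdj r u)).card)
    {u : (Fin d → F) × (Fin d → F)} (hu : u ∈ B) (X Y : Finset (Fin d → F))
    (hX : X.card ≤ 4) (hY : Y.card ≤ 4) :
    ∃ v ∈ B, RatioAdj r u v ∧ v.1 ∉ X ∧ v.2 ∉ Y := by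
  by_contra! hcon
  have hsub : B.filter (RatioAdj r u) ⊆ X ×ˢ E ∪ E ×ˢ Y := by
    intro v hv
    obtain ⟨hvB, hv⟩ := Finset.mem_filter.1 hv
    have hE := Finset.mem_product.1 (hB hvB)
    by_cases hvX : v.1 ∈ X
    · exact Finset.mem_union_left _ (Finset.mem_product.2 ⟨hvX, hE.2⟩)
    · exact Finset.mem_union_right _ (Finset.mem_product.2 ⟨hE.1, hcon v hvB hv hvX⟩)
  have h1 := (Finset.card_le_card hsub).trans (Finset.card_union_le _ _)
  rw [Finset.card_product, Finset.card_product] at h1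
  have h2 := hdeg u hu
  nlinarith

/-- Let `q` be an odd prime power with `q ≥ 5`, let `d ≥ 6` be even,
`r ∈ F_q^*`. If `𝓔 ⊆ F_q^d` has size at least `313·q^(d/2)`, then `𝓔` contains a pair
of `4`-paths with dilation ratio `r`. -/
theorem paths_high_even_dim {F : Type*} [Field F] [Fintype F]
    (hodd : Odd (Fintype.card F)) (hq5 : 5 ≤ Fintype.card F)
    {d : ℕ} (hd6 : 6 ≤ d) (hdeven : Even d)
    {r : F} (hr : r ≠ 0)
    (𝓔 : Finset (Fin d → F))
    (hcard : 313 * (Fintype.card F : ℝ) ^ ((d : ℝ) / 2) ≤ (𝓔.card : ℝ)) :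
    ContainsPairOfPaths 𝓔 4 r := by
  classical
  obtain ⟨m, hd⟩ := hdeven
  have hF : ringChar F ≠ 2 := by
    rw [Ne, FiniteField.even_card_iff_char_two, ← Nat.even_iff, Nat.not_even_iff_odd]
    exact hodd
  have hpow : (Fintype.card F : ℝ) ^ ((d : ℝ) / 2) = (Fintype.card F : ℝ) ^ m := by
    rw [← Real.rpow_natCast]
    congr 1
    rw [hd]
    push_cast
    ring
  rw [hpow] at hcard
  have hcount := (ratio_count hF hq5 hd (by omega) 𝓔 hr hcard).trans (sum_degree 𝓔 hr)
  have hpos : 0 < 𝓔.card := by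
    have h5 : (0 : ℝ) < Fintype.card F := by
      exact_mod_cast (show 0 < Fintype.card F by omega)
    have : (0 : ℝ) < 𝓔.card := lt_of_lt_of_le (by positivity) hcard
    exact_mod_cast this
  obtain ⟨B, hB, ⟨v0, h0⟩, hdeg⟩ := exists_minDegree (RatioAdj r) RatioAdj.symm
    (8 * 𝓔.card + 1) (𝓔 ×ˢ 𝓔) (by
      refine lt_of_lt_of_le ?_ hcount
      rw [Finset.card_product]
      have h3 : 𝓔.card * 𝓔.card ≤ 𝓔.card ^ 3 := by
        rw [← sq]
        exact Nat.pow_le_pow_right hpos (by norm_num)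
      have h4 : 0 < 𝓔.card ^ 3 := by positivity
      nlinarith)
  obtain ⟨v1, h1, a1, b1, c1⟩ := exists_step 𝓔 hB hdeg h0 {v0.1} {v0.2} (by simp) (by simp)
  obtain ⟨v2, h2, a2, b2, c2⟩ := exists_step 𝓔 hB hdeg h1 {v0.1, v1.1} {v0.2, v1.2}
    (Finset.card_le_two.trans (by norm_num)) (Finset.card_le_two.trans (by norm_num))
  obtain ⟨v3, h3, a3, b3, c3⟩ := exists_step 𝓔 hB hdeg h2 {v0.1, v1.1, v2.1} {v0.2, v1.2, v2.2}
    (Finset.card_le_three.trans (by norm_num)) (Finset.card_le_three.trans (by norm_num))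
  obtain ⟨v4, h4, a4, b4, c4⟩ := exists_step 𝓔 hB hdeg h3
    {v0.1, v1.1, v2.1, v3.1} {v0.2, v1.2, v2.2, v3.2} Finset.card_le_four Finset.card_le_four
  have hmem : ∀ v ∈ B, v.1 ∈ 𝓔 ∧ v.2 ∈ 𝓔 := fun v hv => Finset.mem_product.1 (hB hv)
  simp only [Finset.mem_insert, Finset.mem_singleton, not_or] at b1 b2 b3 b4 c1 c2 c3 c4
  have inj : ∀ z0 z1 z2 z3 z4 : Fin d → F, z1 ≠ z0 → (z2 ≠ z0 ∧ z2 ≠ z1) →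
      (z3 ≠ z0 ∧ z3 ≠ z1 ∧ z3 ≠ z2) → (z4 ≠ z0 ∧ z4 ≠ z1 ∧ z4 ≠ z2 ∧ z4 ≠ z3) →
      Function.Injective ![z0, z1, z2, z3, z4] := by
    intro z0 z1 z2 z3 z4 e1 e2 e3 e4 i j hij
    fin_cases i <;> fin_cases j <;> simp_all
  refine ⟨![v0.1, v1.1, v2.1, v3.1, v4.1], ![v0.2, v1.2, v2.2, v3.2, v4.2],
    inj _ _ _ _ _ b1 b2 b3 b4, inj _ _ _ _ _ c1 c2 c3 c4, ?_, ?_, ?_⟩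
  · intro i
    fin_cases i
    exacts [(hmem _ h0).1, (hmem _ h1).1, (hmem _ h2).1, (hmem _ h3).1, (hmem _ h4).1]
  · intro i
    fin_cases i
    exacts [(hmem _ h0).2, (hmem _ h1).2, (hmem _ h2).2, (hmem _ h3).2, (hmem _ h4).2]
  · intro i
    fin_cases i
    exacts [a1, a2, a3, a4]
end
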